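/- Let f be a conservative homeomorphism of 𝕋² homotopic to the identity which is a pseudo-rotation with rotation vector ρ ∈ ℝ² (with respect to a lift F) and has bounded mean motion. Then ρ is rational (ρ ∈ ℚ²) if and only if f has a periodic point, i.e. there exist x ∈ 𝕋² and q ≥ 1 with f^q(x) = x. -/

import Mathlib

open Filter Topology

local notation "⟪" x ", " y "⟫" => @inner ℝ _ _ x y

noncomputable section

/-- Euclidean space `ℝ^d`. -/
abbrev Rd (d : ℕ) := EuclideanSpace ℝ (Fin d)

/-- The `d`-torus `𝕋^d = ℝ^d/ℤ^d`, realized as a product of circles. -/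
abbrev Torus (d : ℕ) := Fin d → AddCircle (1 : ℝ)

/-- The quotient map `π : ℝ^d → 𝕋^d`. -/
def projT {d : ℕ} (z : Rd d) : Torus d := fun i => (z i : AddCircle (1 : ℝ))

/-- An integer vector viewed as an element of `ℝ^d`. -/
def intVec {d : ℕ} (m : Fin d → ℤ) : Rd d := WithLp.toLp 2 (fun i => (m i : ℝ))

/-- A real vector viewed as an element of `ℝ^k`. -/
def vecR {k : ℕ} (ρ : Fin k → ℝ) : Rd k := WithLp.toLp 2 (fun i => ρ i)

/-- `F : ℝ^d → ℝ^d` is a lift of `f : 𝕋^d → 𝕋^d`:  `π ∘ F = f ∘ π` and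
`F (z + m) = F z + m` for every integer vector `m`.  The existence of such a lift
expresses that `f` is homotopic to the identity. -/
def IsLift {d : ℕ} (f : Torus d ≃ₜ Torus d) (F : Rd d ≃ₜ Rd d) : Prop :=
  (∀ z : Rd d, projT (F z) = f (projT z)) ∧
  ∀ (z : Rd d) (m : Fin d → ℤ), F (z + intVec m) = F z + intVec m

/-- The `n`-th iterate (`n ∈ ℤ`) of a homeomorphism. -/
def iterZ {X : Type*} [TopologicalSpace X] (F : X ≃ₜ X) (n : ℤ) : X → X := ⇑(F.toEquiv ^ n)

/-- `f` (with lift `F`) is a pseudo-rotation with rotation vector `ρ` on the invariant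
set `K`: `(Fⁿ z − z)/n → ρ` for every `z ∈ π⁻¹(K)`. -/
def IsPseudoRotationOn {d : ℕ} (F : Rd d ≃ₜ Rd d) (ρ : Rd d) (K : Set (Torus d)) : Prop :=
  ∀ z : Rd d, projT z ∈ K →
    Tendsto (fun n : ℕ => (n : ℝ)⁻¹ • ((⇑F)^[n] z - z)) atTop (𝓝 ρ)

/-- Bounded mean motion on `K`: `‖Fⁿ z − z − n ρ‖ ≤ c` for all `n ∈ ℤ` and `z ∈ π⁻¹(K)`. -/
def BddMeanMotionOn {d : ℕ} (F : Rd d ≃ₜ Rd d) (ρ : Rd d) (K : Set (Torus d)) : Prop :=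
  ∃ c : ℝ, 0 ≤ c ∧ ∀ (n : ℤ) (z : Rd d), projT z ∈ K →
    ‖iterZ F n z - z - (n : ℝ) • ρ‖ ≤ c

/-- `f` is conservative: it admits an invariant Borel probability measure of full
topological support. -/
def Conservative (f : Torus 2 ≃ₜ Torus 2) : Prop :=
  ∃ μ : MeasureTheory.Measure (Torus 2), MeasureTheory.IsProbabilityMeasure μ ∧
    MeasureTheory.MeasurePreserving (⇑f) μ μ ∧
    ∀ U : Set (Torus 2), IsOpen U → U.Nonempty → 0 < μ U

/-- A nonvanishing continuous complex function on a real normed space has a continuous logarithm. -/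
theorem exists_continuous_log {E : Type*} [NormedAddCommGroup E] [NormedSpace ℝ E]
    {g : E → ℂ} (hg : Continuous g) (h0 : ∀ x, g x ≠ 0) :
    ∃ L : E → ℂ, Continuous L ∧ ∀ x, Complex.exp (L x) = g x := by
  obtain ⟨L, ⟨-, hL⟩, -⟩ := Complex.isCoveringMapOn_exp.existsUnique_continuousMap_lifts
    ⟨g, hg⟩ (a₀ := 0) (Complex.exp_log (h0 0)) (fun x => h0 x)
  exact ⟨L, L.continuous, fun x => congrFun hL x⟩

/-- A continuous logarithm of the constant function `1` on a connected space is constant. -/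
theorem exists_int_of_exp_eq_one {X : Type*} [TopologicalSpace X] [PreconnectedSpace X]
    {h : X → ℂ} (hc : Continuous h) (h1 : ∀ x, Complex.exp (h x) = 1) :
    ∃ n : ℤ, ∀ x, h x = n * (2 * Real.pi * Complex.I) := by
  choose n hn using fun x => Complex.exp_eq_one_iff.1 (h1 x)
  have hpi : (2 * Real.pi * Complex.I : ℂ) ≠ 0 := Complex.two_pi_I_ne_zero
  have hcont : Continuous n := by
    rw [Int.isClosedEmbedding_coe_real.isInducing.continuous_iff]
    have : ((↑) : ℤ → ℝ) ∘ n = fun x => (h x / (2 * Real.pi * Complex.I)).re := by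
      ext x
      rw [hn x, mul_div_cancel_right₀ _ hpi]
      simp
    rw [this]
    fun_prop
  rcases isEmpty_or_nonempty X with hX | ⟨⟨x₀⟩⟩
  · exact ⟨0, fun x => (hX.false x).elim⟩
  · exact ⟨n x₀, fun x => by rw [hn x, PreconnectedSpace.constant ‹_› hcont (x := x) (y := x₀)]⟩

/-- A self-homeomorphism at bounded distance from the identity. -/
def BddDisplacement {E : Type*} [SeminormedAddCommGroup E] (G : E ≃ₜ E) : Prop :=
  ∃ c : ℝ, ∀ z, ‖G z - z‖ ≤ c

theorem BddDisplacement.trans {E : Type*} [SeminormedAddCommGroup E] {G H : E ≃ₜ E}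
    (hG : BddDisplacement G) (hH : BddDisplacement H) : BddDisplacement (G.trans H) := by
  obtain ⟨c, hc⟩ := hG
  obtain ⟨d, hd⟩ := hH
  refine ⟨d + c, fun z => ?_⟩
  have : G.trans H z - z = (H (G z) - G z) + (G z - z) := by simp
  rw [this]
  exact (norm_add_le _ _).trans (add_le_add (hd _) (hc _))

/-- A plane homeomorphism `G` with bounded displacement has a continuous, `2πi`-periodic branch of
`log ((G (x + exp w) - G x) / exp w)`. -/
theorem exists_log_difference_quotient {G : ℂ ≃ₜ ℂ} (hG : BddDisplacement G) :
    ∃ L : ℂ × ℂ → ℂ, Continuous L ∧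
      (∀ x w, Complex.exp (L (x, w)) = (G (x + Complex.exp w) - G x) / Complex.exp w) ∧
      ∀ x w, L (x, w + 2 * Real.pi * Complex.I) = L (x, w) := by
  obtain ⟨c, hc⟩ := hG
  let Φ : ℂ × ℂ → ℂ := fun p => (G (p.1 + Complex.exp p.2) - G p.1) / Complex.exp p.2
  have hΦc : Continuous Φ := by
    refine Continuous.div ?_ (by fun_prop) fun p => Complex.exp_ne_zero _
    have := G.continuous
    fun_prop
  have hΦ0 : ∀ p, Φ p ≠ 0 := fun p => by
    refine div_ne_zero (sub_ne_zero.2 fun h => ?_) (Complex.exp_ne_zero _)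
    have := G.injective h
    simp at this
  obtain ⟨L, hLc, hL⟩ := exists_continuous_log hΦc hΦ0
  refine ⟨L, hLc, fun x w => hL (x, w), ?_⟩
  have hper : ∀ x w, Φ (x, w + 2 * Real.pi * Complex.I) = Φ (x, w) := fun x w => by
    simp only [Φ, Complex.exp_periodic w]
  obtain ⟨k, hk⟩ := exists_int_of_exp_eq_one
    (h := fun p : ℂ × ℂ => L (p.1, p.2 + 2 * Real.pi * Complex.I) - L p) (by fun_prop) fun p => by
      rw [Complex.exp_sub, hL, hL, hper]
      exact div_self (hΦ0 p)
  have hc0 : 0 ≤ c := (norm_nonneg _).trans (hc 0)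
  set R : ℝ := Real.log (2 * c + 1) with hR
  have hnear : ∀ t : ℝ, Φ (0, R + t * Complex.I) ∈ Complex.slitPlane := fun t => by
    have hn : ‖Complex.exp (R + t * Complex.I)‖ = 2 * c + 1 := by
      rw [Complex.norm_exp]
      simp [hR, Real.exp_log (by linarith : (0 : ℝ) < 2 * c + 1)]
    apply Complex.ball_one_subset_slitPlane
    set e := Complex.exp (R + t * Complex.I) with he
    have he0 : e ≠ 0 := Complex.exp_ne_zero _
    have : Φ (0, R + t * Complex.I) - 1 = ((G (0 + e) - (0 + e)) - (G 0 - 0)) / e := by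
      simp only [Φ, ← he]
      field_simp
      ring
    rw [mem_ball_iff_norm, this, norm_div, hn, div_lt_one (by linarith)]
    calc _ ≤ c + c := (norm_sub_le _ _).trans (add_le_add (hc _) (hc _))
      _ < 2 * c + 1 := by linarith
  obtain ⟨m, hm⟩ := exists_int_of_exp_eq_one
    (h := fun t : ℝ => L (0, R + t * Complex.I) - Complex.log (Φ (0, R + t * Complex.I)))
    ((by fun_prop : Continuous fun t : ℝ => L (0, R + t * Complex.I)).sub
      (Continuous.clog (by fun_prop) hnear)) fun t => by
      rw [Complex.exp_sub, hL, Complex.exp_log (hΦ0 _)]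
      exact div_self (hΦ0 _)
  have h0 := hm 0
  have h1 := hm (2 * Real.pi)
  push_cast at h0 h1
  rw [hper] at h1
  have hk0 := hk (0, R)
  simp only [zero_mul, add_zero] at h0
  rw [← h0] at h1
  have hLR := sub_left_inj.1 h1
  simp only [hLR, sub_self] at hk0
  intro x w
  have := hk (x, w)
  rw [← hk0] at this
  exact sub_eq_zero.1 this

/-- A fixed point free plane homeomorphism with bounded displacement has no point of
period two. -/
theorem iterate_two_ne_of_fixedPointFree {G : ℂ ≃ₜ ℂ} (hG : BddDisplacement G)
    (hfix : ∀ z, G z ≠ z) (x : ℂ) : G (G x) ≠ x := by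
  intro hx
  have hGc := G.continuous
  obtain ⟨L, hLc, hL, hper⟩ := exists_log_difference_quotient hG
  obtain ⟨θ, hθc, hθ⟩ := exists_continuous_log (g := fun z => G z - z) (by fun_prop)
    fun z => sub_ne_zero.2 (hfix z)
  have hadd : ∀ z, z + Complex.exp (θ z) = G z := fun z => by rw [hθ]; ring
  have hperZ : ∀ (k : ℤ) x w, L (x, w + k * (2 * Real.pi * Complex.I)) = L (x, w) :=
    fun k x => Function.Periodic.int_mul (f := fun w => L (x, w)) (hper x) k
  have hexpI : ∀ w, Complex.exp (w + Real.pi * Complex.I) = -Complex.exp w := fun w => by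
    rw [Complex.exp_add, Complex.exp_pi_mul_I]; ring
  have hne : ∀ x w, G (x + Complex.exp w) - G x ≠ 0 := fun x w h => by
    have := G.injective (sub_eq_zero.1 h)
    simp at this
  obtain ⟨k, hk⟩ := exists_int_of_exp_eq_one
    (h := fun p : ℂ × ℂ => L (p.1 + Complex.exp p.2, p.2 + Real.pi * Complex.I) - L p)
    (by fun_prop) fun p => by
      rw [Complex.exp_sub, hL, hL p.1 p.2, hexpI, div_eq_one_iff_eq]
      · rw [add_neg_cancel_right, div_neg, ← neg_div, neg_sub]
      · exact div_ne_zero (hne _ _) (Complex.exp_ne_zero _)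
  have hsymm : ∀ x w, L (x + Complex.exp w, w + Real.pi * Complex.I) = L (x, w) := by
    intro x w
    have h1 := hk (x, w)
    have h2 := hk (x + Complex.exp w, w + Real.pi * Complex.I)
    simp only [hexpI, add_neg_cancel_right] at h1 h2
    have h3 := hper x w
    rw [show w + 2 * Real.pi * Complex.I = w + Real.pi * Complex.I + Real.pi * Complex.I by ring]
      at h3
    rw [h3] at h2
    linear_combination (h1 - h2) / 2
  obtain ⟨m, hm⟩ := exists_int_of_exp_eq_one
    (h := fun z : ℂ => L (z, θ z) - (θ (G z) - θ z)) (by fun_prop) fun z => by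
      rw [Complex.exp_sub, Complex.exp_sub, hL, hadd, hθ, hθ]
      have h1 := sub_ne_zero.2 (hfix z)
      have h2 := sub_ne_zero.2 (hfix (G z))
      field_simp
  have hθ1 : Complex.exp (θ (G x)) = Complex.exp (θ x + Real.pi * Complex.I) := by
    rw [hexpI, hθ, hθ, hx]; ring
  obtain ⟨j, hj⟩ := Complex.exp_eq_exp_iff_exists_int.1 hθ1
  have hLeq : L (G x, θ (G x)) = L (x, θ x) := by
    rw [hj, hperZ, ← hsymm x, hadd]
  have h0 := hm x
  have h1 := hm (G x)
  simp only [hLeq, hx] at h0 h1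
  have hθeq : θ (G x) = θ x := by linear_combination (h1 - h0) / 2
  have h2 := hθ (G x)
  rw [hθeq, hθ, hx] at h2
  exact hfix x (by linear_combination h2 / 2)

/-- A point can be moved to any point of a ball around it by a homeomorphism supported in
that ball. -/
theorem exists_homeomorph_ball {E : Type*} [NormedAddCommGroup E] [NormedSpace ℝ E]
    [CompleteSpace E] {c b : E} {r : ℝ} (hb : b ∈ Metric.ball c r) :
    ∃ φ : E ≃ₜ E, BddDisplacement φ ∧ (∀ z ∉ Metric.ball c r, φ z = z) ∧ φ c = b := by
  rw [mem_ball_iff_norm] at hb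
  have hr : 0 < r := (norm_nonneg _).trans_lt hb
  let f : E → E := fun z => z + max 0 (1 - ‖z - c‖ / r) • (b - c)
  have hk : 0 ≤ ‖b - c‖ / r := by positivity
  set κ : NNReal := ⟨‖b - c‖ / r, hk⟩
  have hf : ApproximatesLinearOn f ((ContinuousLinearEquiv.refl ℝ E : E ≃L[ℝ] E) : E →L[ℝ] E)
      Set.univ κ := by
    intro p _ q _
    have : f p - f q - ((ContinuousLinearEquiv.refl ℝ E : E ≃L[ℝ] E) : E →L[ℝ] E) (p - q) =
        (max 0 (1 - ‖p - c‖ / r) - max 0 (1 - ‖q - c‖ / r)) • (b - c) := by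
      simp only [f, ContinuousLinearEquiv.coe_refl, ContinuousLinearMap.id_apply, sub_smul]
      abel
    rw [this, norm_smul]
    have h1 : ‖max 0 (1 - ‖p - c‖ / r) - max 0 (1 - ‖q - c‖ / r)‖ ≤ ‖p - q‖ / r := by
      rw [Real.norm_eq_abs, max_comm 0, max_comm 0]
      refine (abs_max_sub_max_le_abs _ _ (0 : ℝ)).trans ?_
      rw [show (1 - ‖p - c‖ / r) - (1 - ‖q - c‖ / r) = (‖q - c‖ - ‖p - c‖) / r by ring,
        abs_div, abs_of_pos hr]
      gcongr
      refine (abs_norm_sub_norm_le _ _).trans ?_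
      rw [sub_sub_sub_cancel_right, norm_sub_rev]
    calc _ ≤ ‖p - q‖ / r * ‖b - c‖ := by gcongr
      _ = ‖b - c‖ / r * ‖p - q‖ := by ring
  have hlt : Subsingleton E ∨ κ <
      ‖((ContinuousLinearEquiv.refl ℝ E).symm : E →L[ℝ] E)‖₊⁻¹ := by
    rcases subsingleton_or_nontrivial E with h | h
    · exact Or.inl h
    · right
      rw [← NNReal.coe_lt_coe]
      have h1 : ‖((ContinuousLinearEquiv.refl ℝ E).symm : E →L[ℝ] E)‖ = 1 :=
        ContinuousLinearMap.norm_id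
      rw [NNReal.coe_inv, coe_nnnorm, h1, inv_one]
      exact (div_lt_one hr).2 hb
  refine ⟨hf.toHomeomorph f hlt, ⟨‖b - c‖, fun z => ?_⟩, fun z hz => ?_, ?_⟩
  · change ‖f z - z‖ ≤ _
    simp only [f, add_sub_cancel_left, norm_smul, Real.norm_eq_abs]
    rw [abs_of_nonneg (le_max_left _ _)]
    refine mul_le_of_le_one_left (norm_nonneg _) (max_le zero_le_one ?_)
    have : 0 ≤ ‖z - c‖ / r := by positivity
    linarith
  · change f z = z
    rw [mem_ball_iff_norm, not_lt] at hz
    have : 1 - ‖z - c‖ / r ≤ 0 := by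
      rw [sub_nonpos, one_le_div hr]
      exact hz
    simp [f, max_eq_left this]
  · change f c = b
    simp [f]

/-- In a connected open set, any point can be moved to any other one by a homeomorphism supported
in that set. -/
theorem exists_homeomorph_of_isPreconnected {E : Type*} [NormedAddCommGroup E] [NormedSpace ℝ E]
    [CompleteSpace E] {V : Set E} (hVo : IsOpen V) (hV : IsPreconnected V) {a b : E}
    (ha : a ∈ V) (hb : b ∈ V) :
    ∃ φ : E ≃ₜ E, BddDisplacement φ ∧ (∀ z ∉ V, φ z = z) ∧ φ a = b := by
  refine hV.induction₂ (fun a b => ∃ φ : E ≃ₜ E, BddDisplacement φ ∧ (∀ z ∉ V, φ z = z) ∧ φ a = b)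
    ?_ ?_ ?_ ha hb
  · intro x hx
    obtain ⟨r, hr, hrV⟩ := Metric.isOpen_iff.1 hVo x hx
    filter_upwards [mem_nhdsWithin_of_mem_nhds (Metric.ball_mem_nhds x hr)] with y hy
    obtain ⟨φ, h1, h2, h3⟩ := exists_homeomorph_ball hy
    exact ⟨φ, h1, fun z hz => h2 z fun h => hz (hrV h), h3⟩
  · rintro x y z - - - ⟨φ, h1, h2, h3⟩ ⟨ψ, k1, k2, k3⟩
    exact ⟨φ.trans ψ, h1.trans k1, fun z hz => by simp [h2 z hz, k2 z hz], by simp [h3, k3]⟩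
  · rintro x y - - ⟨φ, ⟨c, hc⟩, h2, h3⟩
    refine ⟨φ.symm, ⟨c, fun z => ?_⟩, fun z hz => ?_, by simp [← h3]⟩
    · rw [norm_sub_rev]
      simpa using hc (φ.symm z)
    · rw [φ.symm_apply_eq, h2 z hz]

/-- If a compact set is mapped off a closed set, then so is a neighbourhood of it off a
neighbourhood of the closed set. -/
theorem exists_thickening_mapsTo_compl {E : Type*} [PseudoMetricSpace E] {H : E → E}
    (hH : Continuous H) {A B : Set E} (hA : IsCompact A) (hB : IsClosed B)
    (hAB : ∀ p ∈ A, H p ∉ B) :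
    ∃ ε > 0, ∀ δ ≤ ε, ∀ p ∈ Metric.thickening δ A, H p ∉ Metric.thickening δ B := by
  obtain ⟨δ, hδ, hd⟩ := Disjoint.exists_thickenings (s := H '' A) (t := B)
    (Set.disjoint_left.2 (by rintro _ ⟨p, hp, rfl⟩; exact hAB p hp)) (hA.image hH) hB
  obtain ⟨η, hη, hsub⟩ := hA.exists_thickening_subset_open
    (Metric.isOpen_thickening.preimage hH : IsOpen (H ⁻¹' Metric.thickening δ (H '' A)))
    fun p hp => Metric.self_subset_thickening hδ _ (Set.mem_image_of_mem H hp)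
  refine ⟨min δ η, lt_min hδ hη, fun ε hε p hp hp' => ?_⟩
  exact Set.disjoint_left.1 hd
    (hsub (Metric.thickening_mono (hε.trans (min_le_right _ _)) _ hp))
    (Metric.thickening_mono (hε.trans (min_le_left _ _)) _ hp')

/-- The union of two segments issued from `x` has connected thickenings. -/
theorem isPreconnected_thickening_segment_union {E : Type*} [NormedAddCommGroup E]
    [NormedSpace ℝ E] (x a b : E) {ε : ℝ} (hε : 0 < ε) :
    IsPreconnected (Metric.thickening ε (segment ℝ x a ∪ segment ℝ x b)) := by
  rw [Metric.thickening_union]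
  exact IsPreconnected.union x
    (Metric.self_subset_thickening hε _ (left_mem_segment ℝ x a))
    (Metric.self_subset_thickening hε _ (left_mem_segment ℝ x b))
    ((convex_segment x a).thickening ε).isPreconnected
    ((convex_segment x b).thickening ε).isPreconnected

/-- Composing a fixed point free map with a homeomorphism supported in a set disjoint from its
image creates no fixed point. -/
theorem trans_apply_ne_self {X : Type*} [TopologicalSpace X] {G φ : X ≃ₜ X} {V : Set X}
    (hfix : ∀ z, G z ≠ z) (hfree : ∀ p ∈ V, G p ∉ V) (hφ : ∀ z ∉ V, φ z = z) (z : X) :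
    G.trans φ z ≠ z := by
  intro h
  rw [Homeomorph.trans_apply] at h
  by_cases hz : z ∈ V
  · rw [hφ _ (hfree z hz)] at h
    exact hfix z h
  · exact hfix z (φ.injective (h.trans (hφ z hz).symm))

theorem iterate_succ_trans_apply {X : Type*} [TopologicalSpace X] {G φ : X ≃ₜ X} {V : Set X}
    (hφ : ∀ z ∉ V, φ z = z) {p : X} {k : ℕ} (hp : ∀ j, 1 ≤ j → j ≤ k → G^[j] p ∉ V) :
    (G.trans φ)^[k + 1] p = φ (G^[k + 1] p) := by
  induction k with
  | zero => rfl
  | succ k ih =>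
    rw [Function.iterate_succ_apply', ih fun j h1 h2 => hp j h1 (h2.trans k.le_succ),
      hφ _ (hp (k + 1) (by omega) le_rfl), Homeomorph.trans_apply,
      Function.iterate_succ_apply' G (k + 1)]

/-- No fixed point free plane homeomorphism with bounded displacement has a point fixed by its
`n`-th iterate. -/
def NoPeriod (n : ℕ) : Prop :=
  ∀ G : ℂ ≃ₜ ℂ, BddDisplacement G → (∀ z, G z ≠ z) → ∀ x, G^[n] x ≠ x

/-- A connected open set disjoint from its image does not return to itself at a time which is not
a period. -/
theorem iterate_notMem_of_free {n : ℕ} (hn : ∀ k, 1 ≤ k → k < n → NoPeriod k) {G : ℂ ≃ₜ ℂ}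
    (hG : BddDisplacement G) (hfix : ∀ z, G z ≠ z) {V : Set ℂ} (hVo : IsOpen V)
    (hV : IsPreconnected V) (hfree : ∀ p ∈ V, G p ∉ V) {k : ℕ} (h1 : 1 ≤ k) (hk : k < n)
    {p : ℂ} (hp : p ∈ V) : G^[k] p ∉ V := by
  induction k using Nat.strong_induction_on generalizing p with
  | _ k ih =>
    intro hpk
    obtain ⟨φ, hφb, hφ, hφp⟩ := exists_homeomorph_of_isPreconnected hVo hV hpk hp
    obtain ⟨k, rfl⟩ := Nat.exists_eq_add_of_le' h1
    refine hn (k + 1) h1 hk (G.trans φ) (hG.trans hφb) (trans_apply_ne_self hfix hfree hφ) p ?_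
    rw [iterate_succ_trans_apply hφ fun j h1 h2 => ih j (by omega) h1 (by omega) hp, hφp]

theorem isCompact_segment_complex (x a : ℂ) : IsCompact (segment ℝ x a) := by
  rw [← convexHull_pair]
  exact (Set.toFinite _).isCompact_convexHull ℝ

/-- Version of `iterate_notMem_of_free` for a union of two segments. -/
theorem iterate_notMem_segment_union {n : ℕ} (hn : ∀ k, 1 ≤ k → k < n → NoPeriod k) {G : ℂ ≃ₜ ℂ}
    (hG : BddDisplacement G) (hfix : ∀ z, G z ≠ z) {x a b : ℂ}
    (hfree : ∀ p ∈ segment ℝ x a ∪ segment ℝ x b, G p ∉ segment ℝ x a ∪ segment ℝ x b)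
    {k : ℕ} (h1 : 1 ≤ k) (hk : k < n) {p : ℂ} (hp : p ∈ segment ℝ x a ∪ segment ℝ x b) :
    G^[k] p ∉ segment ℝ x a ∪ segment ℝ x b := by
  have hK : IsCompact (segment ℝ x a ∪ segment ℝ x b) :=
    (isCompact_segment_complex x a).union (isCompact_segment_complex x b)
  obtain ⟨ε, hε, h⟩ := exists_thickening_mapsTo_compl G.continuous hK hK.isClosed hfree
  have hsub := Metric.self_subset_thickening hε (segment ℝ x a ∪ segment ℝ x b)
  intro hpk
  exact iterate_notMem_of_free hn hG hfix Metric.isOpen_thickening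
    (isPreconnected_thickening_segment_union x a b hε) (h ε le_rfl) h1 hk (hsub hp) (hsub hpk)

/-- Around every point there is a ball disjoint from its image whose closure is not: some point
and its image both lie in the closed ball. -/
theorem exists_critical_ball {G : ℂ ≃ₜ ℂ} (hfix : ∀ z, G z ≠ z) (x : ℂ) :
    ∃ r > 0, ∃ y, y ∈ Metric.closedBall x r ∧ G y ∈ Metric.closedBall x r ∧
      ∀ p ∈ Metric.ball x r, G p ∉ Metric.ball x r := by
  have hGc := G.continuous
  obtain ⟨y, hy⟩ := (show Continuous fun p => max (dist p x) (dist (G p) x) by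
    fun_prop).exists_forall_le
    (tendsto_atTop_mono (fun p => le_max_left _ _) (tendsto_dist_right_cocompact_atTop x))
  refine ⟨max (dist y x) (dist (G y) x), ?_, y, ?_, ?_, fun p hp hGp => ?_⟩
  · by_contra! h
    have h1 := dist_le_zero.1 ((le_max_left _ _).trans h)
    have h2 := dist_le_zero.1 ((le_max_right _ _).trans h)
    exact hfix y (h2.trans h1.symm)
  · exact le_max_left (dist y x) (dist (G y) x)
  · exact le_max_right (dist y x) (dist (G y) x)
  · exact (max_lt (Metric.mem_ball.1 hp) (Metric.mem_ball.1 hGp)).not_ge (hy p)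

theorem segment_subset_insert_ball {x a : ℂ} {r : ℝ} (hr : 0 < r)
    (ha : a ∈ Metric.closedBall x r) : segment ℝ x a ⊆ insert a (Metric.ball x r) := by
  intro p hp
  rw [segment_eq_image'] at hp
  obtain ⟨t, ⟨ht0, ht1⟩, rfl⟩ := hp
  rw [mem_closedBall_iff_norm] at ha
  rcases ht1.eq_or_lt with rfl | ht1
  · left; simp
  · right
    rw [mem_ball_iff_norm]
    simp only [add_sub_cancel_left, norm_smul, Real.norm_eq_abs, abs_of_nonneg ht0]
    nlinarith [norm_nonneg (a - x)]

/-- A ball disjoint from its image remains so after adding one boundary point. -/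
theorem notMem_insert_ball_of_free {G : ℂ ≃ₜ ℂ} (hfix : ∀ z, G z ≠ z) {x a : ℂ} {r : ℝ}
    (hr : 0 < r) (hfree : ∀ p ∈ Metric.ball x r, G p ∉ Metric.ball x r)
    (ha : a ∈ Metric.closedBall x r) {p : ℂ} (hp : p ∈ insert a (Metric.ball x r)) :
    G p ∉ insert a (Metric.ball x r) := by
  rw [← closure_ball x hr.ne', mem_closure_iff] at ha
  rintro (hGp | hGp) <;> rcases hp with rfl | hp
  · exact hfix p hGp
  · obtain ⟨_, ⟨q, hq, rfl⟩, hGq⟩ := ha _ (G.isOpenMap _ Metric.isOpen_ball) ⟨p, hp, hGp⟩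
    exact hfree q hq hGq
  · obtain ⟨q, hGq, hq⟩ := ha _ (Metric.isOpen_ball.preimage G.continuous) hGp
    exact hfree q hq hGq
  · exact hfree p hp hGp

theorem noPeriod_of_lt {n : ℕ} (h3 : 3 ≤ n) (hn : ∀ k, 1 ≤ k → k < n → NoPeriod k) :
    NoPeriod n := by
  intro G hG hfix x hx
  obtain ⟨r, hr, y, hy, hz, hfree⟩ := exists_critical_ball hfix x
  have hins : ∀ a ∈ Metric.closedBall x r, ∀ p ∈ insert a (Metric.ball x r),
      G p ∉ insert a (Metric.ball x r) := fun a ha p hp =>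
    notMem_insert_ball_of_free hfix hr hfree ha hp
  have hseg : ∀ a ∈ Metric.closedBall x r, segment ℝ x a ⊆ insert a (Metric.ball x r) :=
    fun a ha => segment_subset_insert_ball hr ha
  have hball : ∀ a ∈ Metric.ball x r, segment ℝ x a ⊆ Metric.ball x r := fun a ha =>
    (convex_ball x r).segment_subset (Metric.mem_ball_self hr) ha
  have hsegfree : ∀ a ∈ Metric.closedBall x r, ∀ p ∈ segment ℝ x a, G p ∉ segment ℝ x a :=
    fun a ha p hp h => hins a ha p (hseg a ha hp) (hseg a ha h)
  -- a wedge with one tip inside the ball cannot return to itself after two steps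
  have hwedge : ∀ a ∈ Metric.closedBall x r, ∀ b ∈ Metric.ball x r,
      ∀ p ∈ segment ℝ x a ∪ segment ℝ x b, G (G p) ∉ segment ℝ x a ∪ segment ℝ x b := by
    intro a ha b hb p hp
    have hsub : segment ℝ x a ∪ segment ℝ x b ⊆ insert a (Metric.ball x r) :=
      Set.union_subset (hseg a ha) ((hball b hb).trans (Set.subset_insert _ _))
    exact iterate_notMem_segment_union hn hG hfix (fun p hp h => hins a ha p (hsub hp) (hsub h))
      one_le_two (by omega) hp
  have htwo : ∀ p ∈ segment ℝ x y, (G ∘ G) p ∉ segment ℝ x (G y) := by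
    intro p hp hGp
    rcases hseg y hy hp with rfl | hpb
    · rcases hseg _ hz hGp with h | hGpb
      · exact hfix _ h
      · exact hwedge p hy _ hGpb p (Or.inl hp) (Or.inr (right_mem_segment ℝ _ _))
    · exact hwedge _ hz p hpb p (Or.inr (right_mem_segment ℝ _ _)) (Or.inl hGp)
  have hKz := isCompact_segment_complex x (G y)
  have hKy := isCompact_segment_complex x y
  obtain ⟨ε₁, hε₁, H₁⟩ := exists_thickening_mapsTo_compl G.continuous hKz hKz.isClosed
    (hsegfree _ hz)
  obtain ⟨ε₂, hε₂, H₂⟩ := exists_thickening_mapsTo_compl G.continuous hKy hKy.isClosed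
    (hsegfree _ hy)
  obtain ⟨ε₃, hε₃, H₃⟩ := exists_thickening_mapsTo_compl (G.continuous.comp G.continuous) hKy
    hKz.isClosed htwo
  set ε := min ε₁ (min ε₂ ε₃)
  have hε : 0 < ε := lt_min hε₁ (lt_min hε₂ hε₃)
  replace H₁ := H₁ ε (min_le_left _ _)
  replace H₂ := H₂ ε ((min_le_right _ _).trans (min_le_left _ _))
  replace H₃ := H₃ ε ((min_le_right _ _).trans (min_le_right _ _))
  set V := Metric.thickening ε (segment ℝ x (G y))
  set W := Metric.thickening ε (segment ℝ x y)
  have hV : IsPreconnected V := ((convex_segment x (G y)).thickening ε).isPreconnected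
  have hW : IsPreconnected W := ((convex_segment x y).thickening ε).isPreconnected
  have hxV : x ∈ V := Metric.self_subset_thickening hε _ (left_mem_segment ℝ _ _)
  have hzV : G y ∈ V := Metric.self_subset_thickening hε _ (right_mem_segment ℝ _ _)
  have hxW : x ∈ W := Metric.self_subset_thickening hε _ (left_mem_segment ℝ _ _)
  have hyW : y ∈ W := Metric.self_subset_thickening hε _ (right_mem_segment ℝ _ _)
  obtain ⟨φ, hφb, hφ, hφx⟩ :=
    exists_homeomorph_of_isPreconnected Metric.isOpen_thickening hV hxV hzV
  have hfree' : ∀ p ∈ G '' W, G.trans φ p ∉ G '' W := by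
    rintro _ ⟨q, hq, rfl⟩ ⟨s, hs, hsq⟩
    have hGGq : φ (G (G q)) = G (G q) := hφ _ (H₃ q hq)
    rw [Homeomorph.trans_apply, hGGq] at hsq
    exact H₂ q hq (G.injective hsq ▸ hs)
  obtain ⟨m, rfl⟩ := Nat.exists_eq_add_of_le' (show 2 ≤ n by omega)
  refine iterate_notMem_of_free hn (hG.trans hφb) (trans_apply_ne_self hfix H₁ hφ)
    (G.isOpenMap _ Metric.isOpen_thickening) (hW.image _ G.continuous.continuousOn) hfree'
    (k := m + 1) (by omega) (by omega) (Set.mem_image_of_mem G hxW) ?_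
  rw [iterate_succ_trans_apply hφ, ← Function.iterate_succ_apply, hx, hφx]
  · exact Set.mem_image_of_mem G hyW
  · intro j _ hj
    rw [← Function.iterate_succ_apply]
    exact iterate_notMem_of_free hn hG hfix Metric.isOpen_thickening hV H₁ (by omega) (by omega) hxV

/-- Brouwer lemma: a plane homeomorphism with bounded displacement and a periodic point has a
fixed point. -/
theorem noPeriod {n : ℕ} (h1 : 1 ≤ n) : NoPeriod n := by
  induction n using Nat.strong_induction_on with
  | _ n ih =>
    rcases lt_or_ge n 3 with h | h
    · intro G hG hfix x
      interval_cases n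
      · exact hfix x
      · exact iterate_two_ne_of_fixedPointFree hG hfix x
    · exact noPeriod_of_lt h fun k hk hkn => ih k hkn hk

/-- A plane homeomorphism with bounded displacement and a bounded forward orbit has a fixed
point. -/
theorem exists_fixedPoint_of_bounded_orbit {G : ℂ ≃ₜ ℂ} (hG : BddDisplacement G) {x : ℂ} {R : ℝ}
    (hx : ∀ n : ℕ, G^[n] x ∈ Metric.closedBall x R) : ∃ z, G z = z := by
  by_contra! hfix
  obtain ⟨a, -, ψ, hψ, hlim⟩ := (isCompact_closedBall x R).tendsto_subseq hx
  have ha := hfix a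
  obtain ⟨ε, hε, H⟩ := exists_thickening_mapsTo_compl G.continuous (isCompact_singleton (x := a))
    isClosed_singleton (fun p hp => by rw [hp]; exact ha)
  replace H := H ε le_rfl
  rw [Metric.thickening_singleton] at H
  have hev := hlim.eventually (Metric.ball_mem_nhds a hε)
  obtain ⟨N, hN⟩ := eventually_atTop.1 hev
  have hlt := hψ (Nat.lt_add_one N)
  refine iterate_notMem_of_free (n := ψ (N + 1) - ψ N + 1) (fun k hk _ => noPeriod hk) hG hfix
    Metric.isOpen_ball (convex_ball a ε).isPreconnected H (k := ψ (N + 1) - ψ N) (by omega)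
    (by omega) (hN N le_rfl) ?_
  rw [Function.comp_apply, ← Function.iterate_add_apply, Nat.sub_add_cancel hlt.le]
  exact hN (N + 1) (by omega)

/-- Version of `exists_fixedPoint_of_bounded_orbit` for the Euclidean plane. -/
theorem exists_fixedPoint_of_bounded_iterates {G : Rd 2 ≃ₜ Rd 2} {c : ℝ}
    (hG : ∀ (n : ℕ) z, ‖G^[n] z - z‖ ≤ c) : ∃ z, G z = z := by
  let e : ℂ ≃ₗᵢ[ℝ] Rd 2 := Complex.orthonormalBasisOneI.repr
  let H : ℂ ≃ₜ ℂ := e.toHomeomorph.trans (G.trans e.symm.toHomeomorph)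
  have hH : ∀ z, H z = e.symm (G (e z)) := fun z => rfl
  have hiter : ∀ (n : ℕ) z, e (H^[n] z) = G^[n] (e z) := fun n =>
    Function.Semiconj.iterate_right (f := e) (fun z => by simp [hH]) n
  have hnorm : ∀ (n : ℕ) z, ‖H^[n] z - z‖ ≤ c := fun n z => by
    rw [← e.norm_map, map_sub, hiter]
    exact hG n (e z)
  obtain ⟨z, hz⟩ := exists_fixedPoint_of_bounded_orbit (G := H) ⟨c, hnorm 1⟩ (x := 0) (R := c)
    fun n => mem_closedBall_iff_norm.2 (hnorm n 0)
  exact ⟨e z, by rw [← e.symm.injective.eq_iff, ← hH, hz, e.symm_apply_apply]⟩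

theorem exists_homeomorph_iterate {X : Type*} [TopologicalSpace X] (F : X ≃ₜ X) (n : ℕ) :
    ∃ H : X ≃ₜ X, ⇑H = F^[n] := by
  induction n with
  | zero => exact ⟨Homeomorph.refl X, rfl⟩
  | succ n ih =>
    obtain ⟨H, hH⟩ := ih
    exact ⟨F.trans H, by rw [Function.iterate_succ, ← hH]; rfl⟩

theorem iterZ_natCast {X : Type*} [TopologicalSpace X] (F : X ≃ₜ X) (n : ℕ) :
    iterZ F n = F^[n] := by
  rw [iterZ, zpow_natCast, Equiv.Perm.coe_pow]
  rfl

theorem projT_surjective {d : ℕ} : Function.Surjective (projT (d := d)) := by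
  intro x
  choose z hz using fun i => QuotientAddGroup.mk_surjective (x i)
  exact ⟨WithLp.toLp 2 z, funext hz⟩

theorem projT_add_intVec {d : ℕ} (z : Rd d) (m : Fin d → ℤ) :
    projT (z + intVec m) = projT z := by
  funext i
  have h : (z + intVec m) i = z i + m i • (1 : ℝ) := by simp [intVec]
  simp only [projT]
  rw [h, AddCircle.coe_add, AddCircle.coe_zsmul, AddCircle.coe_period, smul_zero, add_zero]

theorem exists_eq_add_intVec {d : ℕ} {z w : Rd d} (h : projT w = projT z) :
    ∃ m : Fin d → ℤ, w = z + intVec m := by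
  have : ∀ i, ∃ n : ℤ, n • (1 : ℝ) = w i - z i := fun i => by
    rw [← AddCircle.coe_eq_zero_iff, AddCircle.coe_sub, sub_eq_zero]
    exact congrFun h i
  choose m hm using this
  refine ⟨m, ?_⟩
  ext i
  have := hm i
  simp only [zsmul_eq_mul, mul_one] at this
  simp [intVec, this]

theorem IsLift.projT_iterate {d : ℕ} {f : Torus d ≃ₜ Torus d} {F : Rd d ≃ₜ Rd d} (hF : IsLift f F)
    (n : ℕ) (z : Rd d) : projT (F^[n] z) = f^[n] (projT z) :=
  Function.Semiconj.iterate_right (f := projT) hF.1 n z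

theorem IsLift.iterate_add_intVec {d : ℕ} {f : Torus d ≃ₜ Torus d} {F : Rd d ≃ₜ Rd d}
    (hF : IsLift f F) (n : ℕ) (z : Rd d) (m : Fin d → ℤ) :
    F^[n] (z + intVec m) = F^[n] z + intVec m :=
  (Function.Commute.iterate_left (f := F) (g := fun z => z + intVec m) (fun z => hF.2 z m) n) z

/-- If the `q`-th iterate of a lift translates `z` by an integer vector, then its multiples
translate `z` by the multiples of that vector. -/
theorem IsLift.iterate_mul_of_eq_add {d : ℕ} {f : Torus d ≃ₜ Torus d} {F : Rd d ≃ₜ Rd d}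
    (hF : IsLift f F) {q : ℕ} {z : Rd d} {m : Fin d → ℤ} (h : F^[q] z = z + intVec m) (n : ℕ) :
    F^[q * n] z = z + (n : ℝ) • intVec m := by
  induction n with
  | zero => simp
  | succ n ih =>
    rw [Nat.mul_succ, Function.iterate_add_apply, h, hF.iterate_add_intVec, ih]
    push_cast
    rw [add_smul, one_smul, add_assoc]

theorem IsPseudoRotationOn.eq_of_iterate_eq {d : ℕ} {f : Torus d ≃ₜ Torus d} {F : Rd d ≃ₜ Rd d}
    (hF : IsLift f F) {ρ : Rd d} (hpr : IsPseudoRotationOn F ρ Set.univ) {q : ℕ} (hq : 1 ≤ q)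
    {z : Rd d} {m : Fin d → ℤ} (h : F^[q] z = z + intVec m) : ρ = (q : ℝ)⁻¹ • intVec m := by
  have hlim := (hpr z (Set.mem_univ _)).comp (tendsto_id.const_mul_atTop' (show 0 < q by omega))
  refine tendsto_nhds_unique hlim (tendsto_const_nhds.congr' ?_)
  filter_upwards [eventually_ge_atTop 1] with n hn
  have hn0 : (n : ℝ) ≠ 0 := by positivity
  simp only [Function.comp_apply, id]
  rw [hF.iterate_mul_of_eq_add h, add_sub_cancel_left, smul_smul]
  push_cast
  congr 1
  field_simp

/-- A lift with rational rotation vector and bounded mean motion has an iterate which is an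
integer translation at some point. -/
theorem exists_iterate_eq_add_intVec {f : Torus 2 ≃ₜ Torus 2} {F : Rd 2 ≃ₜ Rd 2} (hF : IsLift f F)
    {ρ : Rd 2} (hbmm : BddMeanMotionOn F ρ Set.univ) {q : ℕ} {m : Fin 2 → ℤ}
    (hρ : (q : ℝ) • ρ = intVec m) : ∃ z, F^[q] z = z + intVec m := by
  obtain ⟨c, -, hc⟩ := hbmm
  obtain ⟨H, hH⟩ := exists_homeomorph_iterate F q
  let G : Rd 2 ≃ₜ Rd 2 := H.trans (Homeomorph.subRight (intVec m))
  have hG : ∀ z, G z + intVec m = F^[q] z := fun z => by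
    simp [G, hH]
  have hiter : ∀ (n : ℕ) z, G^[n] z + (n : ℝ) • intVec m = F^[q * n] z := by
    intro n
    induction n with
    | zero => simp
    | succ n ih =>
      intro z
      rw [Nat.mul_succ, Function.iterate_add_apply (⇑F), ← hG, hF.iterate_add_intVec, ← ih,
        Function.iterate_succ_apply]
      push_cast
      rw [add_smul, one_smul, add_assoc]
  obtain ⟨z, hz⟩ := exists_fixedPoint_of_bounded_iterates (G := G) (c := c) fun n z => by
    have h := hc (q * n : ℕ) z (Set.mem_univ _)
    rw [iterZ_natCast, ← hiter, ← hρ] at h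
    convert h using 2
    push_cast
    module
  exact ⟨z, by rw [← hG, hz]⟩

/-- **Theorem C (iii).**  For a conservative pseudo-rotation `f ∈ Homeo₀(𝕋²)` with
rotation vector `ρ` and bounded mean motion, `ρ` is rational if and only if `f` has a
periodic point. -/
theorem statement6 (f : Torus 2 ≃ₜ Torus 2) (F : Rd 2 ≃ₜ Rd 2) (hF : IsLift f F)
    (hcons : Conservative f) (ρ : Rd 2)
    (hpr : IsPseudoRotationOn F ρ Set.univ) (hbmm : BddMeanMotionOn F ρ Set.univ) :
    (∀ i, ∃ q : ℚ, ρ i = (q : ℝ)) ↔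
      ∃ (x : Torus 2) (q : ℕ), 1 ≤ q ∧ (⇑f)^[q] x = x := by
  constructor
  · intro h
    choose r hr using h
    have hq : 1 ≤ ∏ i, (r i).den := Finset.one_le_prod' fun i _ => (r i).den_pos
    have hint : ∀ i, ∃ m : ℤ, ((∏ i, (r i).den : ℕ) : ℝ) * ρ i = m := fun i => by
      obtain ⟨k, hk⟩ := Finset.dvd_prod_of_mem (fun i => (r i).den) (Finset.mem_univ i)
      refine ⟨k * (r i).num, ?_⟩
      rw [hk, hr i]
      have := Rat.mul_den_eq_num (r i)
      have : (r i : ℝ) * (r i).den = (r i).num := by exact_mod_cast this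
      push_cast
      linear_combination (k : ℝ) * this
    choose m hm using hint
    obtain ⟨z, hz⟩ := exists_iterate_eq_add_intVec hF hbmm (q := ∏ i, (r i).den) (m := m)
      (by ext i; simpa [intVec] using hm i)
    exact ⟨projT z, _, hq, by rw [← hF.projT_iterate, hz, projT_add_intVec]⟩
  · rintro ⟨x, q, hq, hx⟩ i
    obtain ⟨z, rfl⟩ := projT_surjective x
    rw [← hF.projT_iterate] at hx
    obtain ⟨m, hm⟩ := exists_eq_add_intVec hx
    refine ⟨(q : ℚ)⁻¹ * m i, ?_⟩
    rw [hpr.eq_of_iterate_eq hF hq hm]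
    simp [intVec]
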